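/- (Fourier shattering.) Let H' ≤ H ≤ G = 𝔽₂ⁿ be subgroups, let f, g : H → ℝ_{≥0}, let d₁, d₂ > 0, and let z₁ ∈ H. Suppose ∑_η f̂(η)·ĝ(η)·(-1)^{⟨η,z₁⟩} ≤ d₁d₂/2, where the sum is over characters η of H that are trivial on H' (i.e. representatives η ∈ 𝔽₂ⁿ of distinct restrictions to H of forms ⟨·,η⟩ vanishing on H'). Define f̄(v) = E_{y ∈ H'}[f(v+y)] and ḡ(v) = E_{y ∈ H'}[g(v+y)] for v ∈ H. Then, with v drawn uniformly from a set of coset representatives of H' in H, either Pr_v[ f̄(v) < (3/4)·d₁ ] > 1/20 or Pr_v[ ḡ(v) < (3/4)·d₂ ] > 1/20. -/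

import Mathlib

open scoped Classical BigOperators

noncomputable section

/-- The group `G = 𝔽₂ⁿ`. -/
abbrev G (n : ℕ) : Type := Fin n → ZMod 2

/-- The coset `H + g` (note that `-g = g` in `𝔽₂ⁿ`). -/
def coset {n : ℕ} (H : AddSubgroup (G n)) (g : G n) : Set (G n) := {x | x + g ∈ H}

/-- The entropy function `f(x) = x log x` (with `f 0 = 0`). -/
def ent (x : ℝ) : ℝ := x * Real.log x

/-- The density of `A` on the coset `H + g`. -/
def dens {n : ℕ} (A : Set (G n)) (H : AddSubgroup (G n)) (g : G n) : ℝ :=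
  (Nat.card ↥(A ∩ coset H g) : ℝ) / (Nat.card ↥H : ℝ)

/-- Mean entropy `F_A(G, H)` of partitioning `G` into cosets of `H`. -/
def meanEntG {n : ℕ} (A : Set (G n)) (H : AddSubgroup (G n)) : ℝ :=
  (∑ g : G n, ent (dens A H g)) / (Fintype.card (G n) : ℝ)

/-- Mean entropy `F_A(H + g, H')` of partitioning the coset `H + g` into cosets of `H'`. -/
def meanEntCoset {n : ℕ} (A : Set (G n)) (H H' : AddSubgroup (G n)) (g : G n) : ℝ :=
  (∑ g₁ : ↥H, ent (dens A H' (g + ↑g₁))) / (Nat.card ↥H : ℝ)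

/-- The standard bilinear form on `𝔽₂ⁿ`. -/
def dotp {n : ℕ} (x y : G n) : ZMod 2 := ∑ i, x i * y i

/-- The character value `(-1)^{⟨x, y⟩}`. -/
def chi {n : ℕ} (x y : G n) : ℝ := if dotp x y = 0 then 1 else -1

/-- Fourier coefficient `f̂_H^g(η) = E_{x ∈ H} [f(x + g) · (-1)^{⟨x, η⟩}]`. -/
def fCoeff {n : ℕ} (H : AddSubgroup (G n)) (g : G n) (f : G n → ℝ) (η : G n) : ℝ :=
  (∑ x : ↥H, f (↑x + g) * chi ↑x η) / (Nat.card ↥H : ℝ)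

/-- `f` is `ρ`-superregular on `H + g`: every Fourier coefficient at a character that is
nontrivial on `H` is at most `ρ` times the zeroth coefficient in absolute value. -/
def SuperregularOn {n : ℕ} (H : AddSubgroup (G n)) (g : G n) (ρ : ℝ) (f : G n → ℝ) : Prop :=
  ∀ η : G n, (∃ x ∈ H, dotp x η ≠ 0) →
    |fCoeff H g f η| ≤ ρ * fCoeff H g f 0

/-- `H'` `(α, β, k)`-shatters `A` on `H + g`. -/
def Shatters {n : ℕ} (H' H : AddSubgroup (G n)) (A : Set (G n)) (g : G n)
    (α β k : ℝ) : Prop :=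
  (Nat.card ↥H : ℝ) / (Nat.card ↥H' : ℝ) ≤ (2 : ℝ) ^ k ∧
  α ≤ (Nat.card {g' : ↥H //
        (Nat.card ↥(A ∩ coset H' (g + ↑g')) : ℝ) ≤ β * dens A H g * (Nat.card ↥H' : ℝ)} : ℝ) /
      (Nat.card ↥H : ℝ)

/-- Number of triangles `(a, b, c)`, `a + b + c = 0`, with `a ∈ S₁`, `b ∈ S₂`, `c ∈ S₃`. -/
def triBetween {n : ℕ} (S₁ S₂ S₃ : Set (G n)) : ℕ :=
  Nat.card {p : G n × G n × G n // p.1 ∈ S₁ ∧ p.2.1 ∈ S₂ ∧ p.2.2 ∈ S₃ ∧ p.1 + p.2.1 + p.2.2 = 0}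

/-- Number of triangles in `A`. -/
def triCount {n : ℕ} (A : Set (G n)) : ℕ := triBetween A A A

/-- The annihilator of `K`: characters trivial on `K`. -/
def ann {n : ℕ} (K : AddSubgroup (G n)) : AddSubgroup (G n) where
  carrier := {η | ∀ x ∈ K, dotp x η = 0}
  zero_mem' := by intro x _; simp [dotp]
  add_mem' := by
    intro a b ha hb x hx
    have h : dotp x (a + b) = dotp x a + dotp x b := by
      simp [dotp, mul_add, Finset.sum_add_distrib]
    rw [h, ha x hx, hb x hx, add_zero]
  neg_mem' := by
    intro a ha x hx
    have h : dotp x (-a) = -dotp x a := by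
      simp [dotp]
    rw [h, ha x hx, neg_zero]

/-- Average of `f` over the coset `v + H'`. -/
def fbar {n : ℕ} (H' : AddSubgroup (G n)) (f : G n → ℝ) (v : G n) : ℝ :=
  (∑ y : ↥H', f (v + ↑y)) / (Nat.card ↥H' : ℝ)

/-- Tower function: `tower 0 = 1`, `tower (i+1) = 2 ^ tower i`. -/
def tower : ℕ → ℕ
  | 0 => 1
  | k + 1 => 2 ^ tower k

/-- `A` is `ε`-far from triangle-free: at least `ε N` elements must be removed from `A`
to destroy all triangles. -/
def FarFromTriangleFree {n : ℕ} (A : Set (G n)) (ε : ℝ) : Prop :=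
  ∀ B ⊆ A, (∀ x ∈ B, ∀ y ∈ B, ∀ z ∈ B, x + y + z ≠ 0) →
    ε * 2 ^ n ≤ (Nat.card ↥(A \ B) : ℝ)

/-- The set of elements of a triangle. -/
def elems {n : ℕ} (p : G n × G n × G n) : Set (G n) := {p.1, p.2.1, p.2.2}

theorem chi_add_left' {n : ℕ} (x y η : G n) : chi (x + y) η = chi x η * chi y η := by
  have h : dotp (x + y) η = dotp x η + dotp y η := by
    simp [dotp, add_mul, Finset.sum_add_distrib]
  unfold chi
  rw [h]
  generalize dotp x η = a
  generalize dotp y η = b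
  have h1 : ∀ c : ZMod 2, c = 0 ∨ c = 1 := by decide
  have h2 : (1 : ZMod 2) + 1 = 0 := by decide
  rcases h1 a with rfl | rfl <;> rcases h1 b with rfl | rfl <;> simp [h2]

theorem chi_comm' {n : ℕ} (x y : G n) : chi x y = chi y x := by
  have h : dotp x y = dotp y x := by simp [dotp, mul_comm]
  unfold chi
  rw [h]

theorem G_add_self' {n : ℕ} (x : G n) : x + x = 0 := by
  funext i
  exact CharTwo.add_self_eq_zero (x i)

theorem chi_sum_one' {n : ℕ} (K : AddSubgroup (G n)) (η : G n)
    (h : ∀ x ∈ K, dotp x η = 0) : ∑ x : ↥K, chi (x : G n) η = (Nat.card ↥K : ℝ) := by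
  have : ∀ x : ↥K, chi (x : G n) η = 1 := fun x => by simp [chi, h x x.2]
  simp [this]

theorem chi_sum_zero' {n : ℕ} (K : AddSubgroup (G n)) (η : G n)
    (h : ¬ ∀ x ∈ K, dotp x η = 0) : ∑ x : ↥K, chi (x : G n) η = 0 := by
  push Not at h
  obtain ⟨x, hx, hd⟩ := h
  have h1 : ∑ y : ↥K, chi (y : G n) η = ∑ y : ↥K, chi ((y + ⟨x, hx⟩ : ↥K) : G n) η :=
    (Equiv.sum_comp (Equiv.addRight (⟨x, hx⟩ : ↥K)) (fun y : ↥K => chi (y : G n) η)).symm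
  have h2 : chi x η = -1 := by simp [chi, hd]
  simp only [AddSubgroup.coe_add, chi_add_left', h2] at h1
  simp at h1
  linarith

theorem chi_sum_nonneg' {n : ℕ} (K : AddSubgroup (G n)) (η : G n) :
    0 ≤ ∑ x : ↥K, chi (x : G n) η := by
  by_cases h : ∀ x ∈ K, dotp x η = 0
  · rw [chi_sum_one' K η h]; positivity
  · rw [chi_sum_zero' K η h]

theorem card_ann' {n : ℕ} (K : AddSubgroup (G n)) :
    (Nat.card ↥K : ℝ) * (Nat.card ↥(ann K) : ℝ) = (Nat.card (G n) : ℝ) := by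
  have h1 : ∑ η : G n, ∑ x : ↥K, chi (x : G n) η
      = (Nat.card ↥K : ℝ) * (Nat.card ↥(ann K) : ℝ) := by
    have : ∀ η : G n, ∑ x : ↥K, chi (x : G n) η = if η ∈ ann K then (Nat.card ↥K : ℝ) else 0 := by
      intro η
      split_ifs with h
      · exact chi_sum_one' K η h
      · exact chi_sum_zero' K η h
    simp only [this]
    rw [← Finset.sum_filter, Finset.sum_const, nsmul_eq_mul, mul_comm]
    congr 2
    rw [Nat.card_eq_fintype_card, Fintype.card_subtype]
  have h2 : ∑ η : G n, ∑ x : ↥K, chi (x : G n) η = (Nat.card (G n) : ℝ) := by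
    rw [Finset.sum_comm, Finset.sum_eq_single (0 : ↥K)]
    · simp [chi, dotp]
    · intro x _ hx
      have hx' : (x : G n) ≠ 0 := by simpa using hx
      obtain ⟨i, hi⟩ := Function.ne_iff.mp hx'
      have := chi_sum_zero' (⊤ : AddSubgroup (G n)) (x : G n) (by
        push Not
        refine ⟨Pi.single i 1, trivial, ?_⟩
        simpa [dotp, Pi.single_apply] using hi)
      rw [← this]
      simp only [chi_comm' (x : G n)]
      exact (Equiv.sum_comp (AddSubgroup.topEquiv (G := G n)).toEquiv
        (fun y : G n => chi y (x : G n))).symm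
    · simp
  rw [← h1, h2]

theorem fbar_inv' {n : ℕ} (H' : AddSubgroup (G n)) (g : G n → ℝ) (v b : G n) (hb : b ∈ H') :
    fbar H' g (v + b) = fbar H' g v := by
  unfold fbar
  congr 1
  rw [← Equiv.sum_comp (Equiv.addLeft (⟨b, hb⟩ : ↥H')) (fun y : ↥H' => g (v + y))]
  simp [add_assoc]

theorem fbar_sum' {n : ℕ} (H' H : AddSubgroup (G n)) (hle : H' ≤ H) (f k : G n → ℝ)
    (hk : ∀ v, ∀ b ∈ H', k (v + b) = k v) :
    ∑ x : ↥H, fbar H' f x * k x = ∑ x : ↥H, f x * k x := by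
  have hc : (Nat.card ↥H' : ℝ) ≠ 0 := by
    have : 0 < Nat.card ↥H' := Nat.card_pos
    positivity
  have h : ∀ b : ↥H', ∑ x : ↥H, f ((x : G n) + b) * k x = ∑ x : ↥H, f x * k x := by
    intro b
    rw [← Equiv.sum_comp (Equiv.addRight (⟨b, hle b.2⟩ : ↥H)) (fun x : ↥H => f x * k x)]
    refine Finset.sum_congr rfl fun x _ => ?_
    simp [hk x b b.2]
  have : ∑ x : ↥H, fbar H' f x * k x
      = (∑ b : ↥H', ∑ x : ↥H, f ((x : G n) + b) * k x) / (Nat.card ↥H' : ℝ) := by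
    rw [Finset.sum_comm, Finset.sum_div]
    refine Finset.sum_congr rfl fun x _ => ?_
    rw [fbar, ← Finset.sum_mul]; ring
  rw [this]
  simp only [h]
  rw [Finset.sum_const, nsmul_eq_mul, Finset.card_univ, ← Nat.card_eq_fintype_card]
  field_simp

theorem inner_bound' {n : ℕ} (H' H : AddSubgroup (G n)) (hle : H' ≤ H) (g : G n → ℝ)
    (hg : ∀ x, 0 ≤ g x) (t : G n) (ht : t ∈ H) :
    (Nat.card (G n) : ℝ) * fbar H' g t
      ≤ ∑ y : ↥H, g y * ∑ η : ↥(ann H'), chi (η : G n) (t + y) := by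
  have hc : (Nat.card ↥H' : ℝ) ≠ 0 := by
    have : 0 < Nat.card ↥H' := Nat.card_pos
    positivity
  rw [← Equiv.sum_comp (Equiv.addLeft (⟨t, ht⟩ : ↥H))
    (fun y : ↥H => g y * ∑ η : ↥(ann H'), chi (η : G n) (t + y))]
  have e : ∀ u : G n, t + (t + u) = u := fun u => by rw [← add_assoc, G_add_self', zero_add]
  simp only [Equiv.coe_addLeft, AddSubgroup.coe_add, e]
  have h1 : (Nat.card (G n) : ℝ) * fbar H' g t
      = ∑ b : ↥H', g (t + b) * ∑ η : ↥(ann H'), chi (η : G n) b := by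
    have : ∀ b : ↥H', ∑ η : ↥(ann H'), chi (η : G n) b = (Nat.card ↥(ann H') : ℝ) := by
      intro b
      apply chi_sum_one'
      intro η hη
      have := hη b b.2
      rw [← this]
      simp [dotp, mul_comm]
    simp only [this]
    rw [← Finset.sum_mul, ← card_ann' H', fbar]
    field_simp
  rw [h1]
  have h2 : ∀ u : ↥H, 0 ≤ g (t + u) * ∑ η : ↥(ann H'), chi (η : G n) u := fun u =>
    mul_nonneg (hg _) (chi_sum_nonneg' _ _)
  calc _ = ∑ u ∈ Finset.univ.map ⟨AddSubgroup.inclusion hle, AddSubgroup.inclusion_injective hle⟩,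
        g (t + u) * ∑ η : ↥(ann H'), chi (η : G n) u := by
        rw [Finset.sum_map]; rfl
    _ ≤ _ := Finset.sum_le_sum_of_subset_of_nonneg (Finset.subset_univ _) fun u _ _ => h2 u

theorem fourier_shattering {n : ℕ} (H' H : AddSubgroup (G n)) (hle : H' ≤ H)
    (f g : G n → ℝ) (hf : ∀ x, 0 ≤ f x) (hg : ∀ x, 0 ≤ g x)
    (d₁ d₂ : ℝ) (hd₁ : 0 < d₁) (hd₂ : 0 < d₂) (z₁ : G n) (hz : z₁ ∈ H)
    (hsum : (∑ η : ↥(ann H'), fCoeff H 0 f ↑η * fCoeff H 0 g ↑η * chi ↑η z₁)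
              / (Nat.card ↥(ann H) : ℝ) ≤ d₁ * d₂ / 2) :
    1 / 20 < (Nat.card {v : ↥H // fbar H' f ↑v < 3 / 4 * d₁} : ℝ) / (Nat.card ↥H : ℝ) ∨
    1 / 20 < (Nat.card {v : ↥H // fbar H' g ↑v < 3 / 4 * d₂} : ℝ) / (Nat.card ↥H : ℝ) := by
  have hcH : (0 : ℝ) < Nat.card ↥H := by exact_mod_cast (Nat.card_pos : 0 < Nat.card ↥H)
  have hcA : (0 : ℝ) < Nat.card ↥(ann H) := by
    exact_mod_cast (Nat.card_pos : 0 < Nat.card ↥(ann H))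
  -- the Fourier sum
  have hS : ∑ η : ↥(ann H'), fCoeff H 0 f ↑η * fCoeff H 0 g ↑η * chi ↑η z₁
      = (∑ x : ↥H, f x * ∑ y : ↥H, g y * ∑ η : ↥(ann H'), chi (η : G n) (x + z₁ + y))
        / (Nat.card ↥H : ℝ) ^ 2 := by
    have : ∀ η : ↥(ann H'), fCoeff H 0 f ↑η * fCoeff H 0 g ↑η * chi ↑η z₁
        = (∑ x : ↥H, ∑ y : ↥H, f x * (g y * chi (η : G n) (x + z₁ + y)))
          / (Nat.card ↥H : ℝ) ^ 2 := by
      intro η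
      simp only [fCoeff, add_zero]
      rw [div_mul_div_comm, div_mul_eq_mul_div, ← sq, Finset.sum_mul_sum]
      congr 1
      rw [Finset.sum_mul]
      refine Finset.sum_congr rfl fun x _ => ?_
      rw [Finset.sum_mul]
      refine Finset.sum_congr rfl fun y _ => ?_
      rw [chi_comm' (η : G n), chi_comm' (η : G n), chi_add_left', chi_add_left']
      ring
    simp only [this]
    rw [← Finset.sum_div]
    congr 1
    rw [Finset.sum_comm]
    refine Finset.sum_congr rfl fun x _ => ?_
    rw [Finset.sum_comm, Finset.mul_sum]
    refine Finset.sum_congr rfl fun y _ => ?_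
    rw [Finset.mul_sum, Finset.mul_sum]
  have hlow : (Nat.card (G n) : ℝ) * ∑ x : ↥H, fbar H' f x * fbar H' g (x + z₁)
      ≤ ∑ x : ↥H, f x * ∑ y : ↥H, g y * ∑ η : ↥(ann H'), chi (η : G n) (x + z₁ + y) := by
    rw [fbar_sum' H' H hle f (fun v => fbar H' g (v + z₁)) (fun v b hb => by
      rw [add_right_comm, fbar_inv' H' g _ b hb]), Finset.mul_sum]
    refine Finset.sum_le_sum fun x _ => ?_
    have := mul_le_mul_of_nonneg_left
      (inner_bound' H' H hle g hg (x + z₁) (H.add_mem x.2 hz)) (hf x)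
    linarith
  have hmain : ∑ x : ↥H, fbar H' f x * fbar H' g (x + z₁)
      ≤ (Nat.card ↥H : ℝ) * (d₁ * d₂ / 2) := by
    rw [hS, div_div, div_le_iff₀ (by positivity)] at hsum
    rw [← card_ann' H] at hlow
    have h3 := hlow.trans hsum
    have hp : (0 : ℝ) < (Nat.card ↥H : ℝ) * (Nat.card ↥(ann H) : ℝ) := by positivity
    refine le_of_mul_le_mul_left ?_ hp
    linarith
  have hf0 : ∀ v, 0 ≤ fbar H' f v := fun v =>
    div_nonneg (Finset.sum_nonneg fun _ _ => hf _) (by positivity)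
  have hg0 : ∀ v, 0 ≤ fbar H' g v := fun v =>
    div_nonneg (Finset.sum_nonneg fun _ _ => hg _) (by positivity)
  by_contra hcon
  push Not at hcon
  obtain ⟨hA, hB⟩ := hcon
  rw [div_le_iff₀ hcH] at hA hB
  have cardsum : ∀ P : ↥H → Prop,
      (Nat.card {v : ↥H // P v} : ℝ) = ∑ v : ↥H, if P v then (1 : ℝ) else 0 := by
    intro P
    rw [Nat.card_eq_fintype_card, Fintype.card_subtype]
    simp
  rw [cardsum] at hA hB
  rw [← Equiv.sum_comp (Equiv.addRight (⟨z₁, hz⟩ : ↥H))] at hB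
  simp only [Equiv.coe_addRight, AddSubgroup.coe_add] at hB
  have hpt : ∀ v : ↥H, 9 / 16 * (d₁ * d₂) * (1 - (if fbar H' f v < 3 / 4 * d₁ then (1 : ℝ) else 0)
      - (if fbar H' g (v + z₁) < 3 / 4 * d₂ then (1 : ℝ) else 0))
      ≤ fbar H' f v * fbar H' g (v + z₁) := by
    intro v
    have hp := mul_nonneg (hf0 v) (hg0 (v + z₁))
    have hd := mul_pos hd₁ hd₂
    split_ifs with h1 h2 h2
    · linarith
    · linarith
    · linarith
    · push Not at h1 h2
      have := mul_le_mul h1 h2 (by positivity) (hf0 v)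
      linarith
  have hs := (Finset.sum_le_sum fun v (_ : v ∈ Finset.univ) => hpt v).trans hmain
  rw [← Finset.mul_sum, Finset.sum_sub_distrib, Finset.sum_sub_distrib] at hs
  have hc1 : ∑ v : ↥H, (1 : ℝ) = (Nat.card ↥H : ℝ) := by simp
  rw [hc1] at hs
  have hd := mul_pos hd₁ hd₂
  have h9 := mul_le_mul_of_nonneg_left (add_le_add hA hB) hd.le
  have := mul_pos hd hcH
  linarith
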